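/- arXiv:0907.5283 — 6 statements merged into one kernel-verified Lean document; each statement's English description precedes it below -/
import Mathlib

section
/- For every natural number n ≥ 2, the polynomial X^n − X + 1, regarded as a polynomial over ℚ, is separable (equivalently, it is coprime to its derivative n·X^(n−1) − 1, so it has n distinct complex roots). -/
open Polynomial

/-!
Let `f = a X ^ (m + 1) + b X + c`. The combination `(m + 1) f - X f'` is the linear polynomial
`m b X + (m + 1) c`, so modulo `f` and `f'` the element `m b X` equals `-(m + 1) c`. Substituting
this into `(m b) ^ m f' = a (m + 1) (m b X) ^ m + b (m b) ^ m` shows that the ideal generated by `f`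
and `f'` contains `a (m + 1) ^ (m + 1) (-c) ^ m + m ^ m b ^ (m + 1)`. For `X ^ n - X + 1` this
constant is `n ^ n - (n - 1) ^ (n - 1)` up to sign, and a nonzero rational number is a unit.
-/

section CommRing

variable {R : Type*} [CommRing R]

lemma isCoprime_of_isUnit_mul_add_mul {x y p q : R} (h : IsUnit (p * x + q * y)) :
    IsCoprime x y := by
  obtain ⟨u, hu⟩ := h.exists_left_inv
  exact ⟨u * p, u * q, by linear_combination hu⟩

lemma derivative_trinomial_zero_one_succ (m : ℕ) (a b c : R) :
    derivative (trinomial 0 1 (m + 1) c b a) = C a * (m + 1 : R[X]) * X ^ m + C b := by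
  simp only [trinomial_def, pow_zero, pow_one, mul_one, derivative_C, derivative_C_mul,
    derivative_X, derivative_X_pow_succ, map_add, map_natCast, map_one]
  ring

lemma succ_mul_trinomial_sub_X_mul_derivative (m : ℕ) (a b c : R) :
    (m + 1 : R[X]) * trinomial 0 1 (m + 1) c b a
        - X * derivative (trinomial 0 1 (m + 1) c b a)
      = (m : R[X]) * C b * X + (m + 1 : R[X]) * C c := by
  rw [derivative_trinomial_zero_one_succ, trinomial_def]
  ring

lemma exists_mul_trinomial_add_mul_derivative_eq_C (m : ℕ) (a b c : R) :
    ∃ p q : R[X], p * trinomial 0 1 (m + 1) c b a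
        + q * derivative (trinomial 0 1 (m + 1) c b a)
      = C (a * (m + 1) ^ (m + 1) * (-c) ^ m + m ^ m * b ^ (m + 1)) := by
  have linear_eq := succ_mul_trinomial_sub_X_mul_derivative m a b c
  have derivative_eq := derivative_trinomial_zero_one_succ m a b c
  set f : R[X] := trinomial 0 1 (m + 1) c b a
  obtain ⟨s, hs⟩ : (m : R[X]) * C b * X - (m + 1 : R[X]) * -C c ∣
      ((m : R[X]) * C b * X) ^ m - ((m + 1 : R[X]) * -C c) ^ m :=
    sub_dvd_pow_sub_pow _ _ m
  have scaled_derivative_eq : ((m : R[X]) * C b) ^ m * derivative f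
      = C a * (m + 1 : R[X]) * ((m : R[X]) * C b * X) ^ m + (m : R[X]) ^ m * C b ^ (m + 1) := by
    rw [derivative_eq]
    ring
  refine ⟨-(C a * (m + 1 : R[X]) ^ 2 * s),
    ((m : R[X]) * C b) ^ m + C a * (m + 1 : R[X]) * s * X, ?_⟩
  calc -(C a * (m + 1 : R[X]) ^ 2 * s) * f
        + (((m : R[X]) * C b) ^ m + C a * (m + 1 : R[X]) * s * X) * derivative f
      = C a * (m + 1 : R[X]) * ((m + 1 : R[X]) * -C c) ^ m
          + (m : R[X]) ^ m * C b ^ (m + 1) := by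
        linear_combination
          scaled_derivative_eq + C a * (m + 1 : R[X]) * hs
            - C a * (m + 1 : R[X]) * s * linear_eq
    _ = C (a * (m + 1) ^ (m + 1) * (-c) ^ m + m ^ m * b ^ (m + 1)) := by
        simp only [map_add, map_mul, map_pow, map_neg, map_natCast, map_one, mul_pow]
        ring

theorem separable_trinomial_of_isUnit (m : ℕ) {a b c : R}
    (h : IsUnit (a * (m + 1) ^ (m + 1) * (-c) ^ m + m ^ m * b ^ (m + 1))) :
    (trinomial 0 1 (m + 1) c b a).Separable := by
  obtain ⟨p, q, hpq⟩ := exists_mul_trinomial_add_mul_derivative_eq_C m a b c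
  exact isCoprime_of_isUnit_mul_add_mul (hpq ▸ isUnit_C.mpr h)

theorem stmt1_general (m : ℕ) (h : IsUnit ((m + 1 : R) ^ (m + 1) - m ^ m)) :
    (X ^ (m + 1) - X + 1 : R[X]).Separable := by
  have trinomial_eq : (X ^ (m + 1) - X + 1 : R[X]) = trinomial 0 1 (m + 1) 1 (-1) 1 := by
    simp only [trinomial_def, C_neg, C_1]
    ring
  have constant_eq : (1 : R) * (m + 1) ^ (m + 1) * (-1) ^ m + m ^ m * (-1) ^ (m + 1)
      = (-1) ^ m * ((m + 1) ^ (m + 1) - m ^ m) := by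
    ring
  rw [trinomial_eq]
  apply separable_trinomial_of_isUnit
  rw [constant_eq]
  exact (isUnit_one.neg.pow m).mul h

end CommRing

lemma succ_pow_succ_sub_pow_self_ne_zero {R : Type*} [Ring R] [CharZero R] {m : ℕ} (hm : m ≠ 0) :
    (m + 1 : R) ^ (m + 1) - m ^ m ≠ 0 := by
  have lt : m ^ m < (m + 1) ^ (m + 1) :=
    Nat.pow_self_strictMonoOn hm m.succ_ne_zero m.lt_succ_self
  exact sub_ne_zero.mpr (mod_cast lt.ne')

/-- For every `n ≥ 2`, the polynomial `X^n - X + 1` over `ℚ` is separable. -/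
theorem stmt1 (n : ℕ) (hn : 2 ≤ n) :
    (X ^ n - X + 1 : ℚ[X]).Separable := by
  obtain ⟨m, rfl⟩ := Nat.exists_eq_add_of_le' (one_le_two.trans hn)
  exact stmt1_general m (succ_pow_succ_sub_pow_self_ne_zero (by lia)).isUnit
end

section
/- Let n ≥ 2 be an even natural number and let F be an n×n real matrix whose characteristic polynomial equals X^n − X + 1. Then every n×n real matrix G that commutes with F (i.e. F·G = G·F) satisfies det G ≥ 0. -/
open Polynomial

/-!
An odd-dimensional real operator has an eigenvalue, because its characteristic polynomial has odd
degree. If `F` has no real eigenvalue and `G` commutes with `F`, then every generalized eigenspace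
of `G` is `F`-invariant, hence even-dimensional; so every real root of the characteristic polynomial
of `G` has even multiplicity, that polynomial is nonnegative on `ℝ`, and in even dimension its value
at `0` is `det G`.
-/

theorem even_natDegree_of_forall_not_isRoot {p : ℝ[X]} (hp : ∀ x, ¬p.IsRoot x) :
    Even p.natDegree := by
  wlog hlc : 0 ≤ p.leadingCoeff generalizing p
  · rw [← natDegree_neg]
    refine this (fun x hx => hp x ?_) ?_
    · rwa [IsRoot, eval_neg, neg_eq_zero] at hx
    · rw [leadingCoeff_neg]
      exact neg_nonneg.2 (le_of_not_ge hlc)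
  have hpos : 0 < p.eval 0 :=
    zero_lt_eval_of_roots_lt_of_leadingCoeff_nonneg (fun y hy => absurd hy (hp y)) hlc
  have hsign : 0 < Int.negOnePow p.natDegree * p.eval 0 :=
    zero_lt_negOnePow_mul_eval_of_lt_roots_of_leadingCoeff_nonneg (fun y hy => absurd hy (hp y)) hlc
  by_contra hodd
  rw [Nat.not_even_iff_odd, ← Int.odd_coe_nat] at hodd
  rw [Int.negOnePow_odd _ hodd] at hsign
  push_cast at hsign
  linarith

theorem eval_nonneg_of_even_rootMultiplicity {p : ℝ[X]} {x : ℝ} (hlc : 0 ≤ p.leadingCoeff)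
    (heven : ∀ a, x < a → Even (p.rootMultiplicity a)) : 0 ≤ p.eval x := by
  rcases eq_or_ne p 0 with rfl | hp
  · rw [eval_zero]
  obtain ⟨q, hpq, -, hq_roots⟩ := exists_prod_multiset_X_sub_C_mul p
  have hq : q ≠ 0 := right_ne_zero_of_mul (hpq ▸ hp)
  have hq_lc : q.leadingCoeff = p.leadingCoeff := by
    rw [← hpq, leadingCoeff_mul, (monic_multisetProd_X_sub_C p.roots).leadingCoeff, one_mul]
  have hq_pos : 0 < q.eval x := by
    refine zero_lt_eval_of_roots_lt_of_leadingCoeff_nonneg (fun y hy => ?_) (hq_lc ▸ hlc)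
    rw [← mem_roots hq, hq_roots] at hy
    exact absurd hy (Multiset.notMem_zero y)
  have hprod : 0 ≤ (p.roots.map fun a => X - C a).prod.eval x := by
    rw [Finset.prod_multiset_map_count, eval_prod]
    refine Finset.prod_nonneg fun a _ => ?_
    rw [eval_pow, eval_sub, eval_X, eval_C, count_roots]
    rcases le_or_gt a x with hax | hxa
    · exact pow_nonneg (sub_nonneg.2 hax) _
    · exact (heven a hxa).pow_nonneg _
  rw [← hpq, eval_mul]
  exact mul_nonneg hprod hq_pos.le

theorem hasEigenvalue_of_hasEigenvalue_restrict {R M : Type*} [CommRing R] [AddCommGroup M]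
    [Module R M] {f : Module.End R M} {p : Submodule R M} (hfp : ∀ x ∈ p, f x ∈ p) {μ : R}
    (h : Module.End.HasEigenvalue (f.restrict hfp) μ) : f.HasEigenvalue μ := by
  rw [Module.End.hasEigenvalue_iff] at h ⊢
  contrapose! h
  exact Module.End.eigenspace_restrict_eq_bot hfp (h ▸ disjoint_bot_left)

section RealEndomorphism

variable {V : Type*} [AddCommGroup V] [Module ℝ V] [FiniteDimensional ℝ V] {f g : Module.End ℝ V}

theorem even_finrank_of_forall_not_hasEigenvalue (hf : ∀ μ, ¬f.HasEigenvalue μ) :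
    Even (Module.finrank ℝ V) := by
  rw [← f.charpoly_natDegree]
  exact even_natDegree_of_forall_not_isRoot fun μ hμ =>
    hf μ ((f.hasEigenvalue_iff_isRoot_charpoly μ).2 hμ)

theorem even_rootMultiplicity_charpoly_of_commute (hfg : Commute f g)
    (hf : ∀ μ, ¬f.HasEigenvalue μ) (a : ℝ) : Even (g.charpoly.rootMultiplicity a) := by
  have hinv := Module.End.mapsTo_maxGenEigenspace_of_comm hfg.symm a
  rw [← LinearMap.finrank_maxGenEigenspace_eq]
  exact even_finrank_of_forall_not_hasEigenvalue (f := f.restrict hinv) fun μ hμ =>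
    hf μ (hasEigenvalue_of_hasEigenvalue_restrict hinv hμ)

theorem det_nonneg_of_commute_of_forall_not_hasEigenvalue (hfg : Commute f g)
    (hf : ∀ μ, ¬f.HasEigenvalue μ) : 0 ≤ LinearMap.det g := by
  rw [LinearMap.det_eq_sign_charpoly_coeff,
    (even_finrank_of_forall_not_hasEigenvalue hf).neg_one_pow, one_mul, coeff_zero_eq_eval_zero]
  refine eval_nonneg_of_even_rootMultiplicity ?_ fun a _ =>
    even_rootMultiplicity_charpoly_of_commute hfg hf a
  exact g.charpoly_monic.leadingCoeff ▸ zero_le_one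

end RealEndomorphism

theorem pow_sub_self_add_one_pos {R : Type*} [Ring R] [LinearOrder R] [IsStrictOrderedRing R]
    {n : ℕ} (hn : Even n) (hn0 : n ≠ 0) (x : R) : 0 < x ^ n - x + 1 := by
  rcases lt_or_ge x 1 with hx | hx
  · rw [sub_add]
    exact sub_pos.2 ((sub_neg.2 hx).trans_le (hn.pow_nonneg x))
  · exact add_pos_of_nonneg_of_pos (sub_nonneg.2 (le_self_pow₀ hx hn0)) one_pos

theorem stmt2_general {ι : Type*} [Fintype ι] [DecidableEq ι] {F G : Matrix ι ι ℝ}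
    (hF : ∀ x, ¬F.charpoly.IsRoot x) (hFG : Commute F G) : 0 ≤ G.det := by
  rw [← LinearMap.det_toLin']
  refine det_nonneg_of_commute_of_forall_not_hasEigenvalue (f := F.toLin')
    (hFG.map Matrix.toLinAlgEquiv') fun x => ?_
  rw [Module.End.hasEigenvalue_iff_isRoot_charpoly, Matrix.charpoly_toLin']
  exact hF x

/-- If `n ≥ 2` is even and `F` is a real `n × n` matrix with characteristic polynomial
`X^n - X + 1`, then every real matrix `G` commuting with `F` has nonnegative determinant. -/
theorem stmt2 (n : ℕ) (hn : 2 ≤ n) (hne : Even n)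
    (F : Matrix (Fin n) (Fin n) ℝ) (hF : F.charpoly = X ^ n - X + 1)
    (G : Matrix (Fin n) (Fin n) ℝ) (hFG : F * G = G * F) :
    0 ≤ G.det :=
  stmt2_general (fun x hx => (pow_sub_self_add_one_pos hne (by lia) x).ne'
    (by simpa [hF] using hx)) hFG
end

section
/- Let F be the 2×2 integer matrix with rows (0, −1) and (1, 1) (whose characteristic polynomial is X² − X + 1), and let F' be its inverse over ℤ, the matrix with rows (1, 1) and (−1, 0). Then every 2×2 integer matrix G satisfying G·F = F'·G has det G ≤ 0. In particular, there is no such G with det G = 1. -/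
/-!
The binary quadratic form `q_A x = det [x, A x]` has the discriminant of `A`, so it is definite
when `A` is elliptic. If `G * A = B * G`, then `G` carries the pair `x, A x` to `G x, B (G x)`, so
`q_B (G x) = det G * q_A x`. For `B = adjugate A = trace A • 1 - A` one has `q_B = -q_A`, hence
`-q_A (G x) = det G * q_A x`, and definiteness of `q_A` forces `det G ≤ 0`. For
`A = !![0, -1; 1, 1]` the form is `x₀² + x₀ x₁ + x₁²`, and `det G = -q_A (G e₀)`.
-/

section KrylovDet

open scoped Matrix

variable {R : Type*} [CommRing R]

/-- The binary quadratic form `x ↦ det [x, A x]` of a `2 × 2` matrix `A`, which vanishes at the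
eigenvectors of `A` and is used to compare the orientations of `A` and of a matrix intertwined
with it. The two vectors are placed as rows. -/
def krylovDet (A : Matrix (Fin 2) (Fin 2) R) (x : Fin 2 → R) : R :=
  (Matrix.of ![x, A *ᵥ x]).det

theorem krylovDet_eq (A : Matrix (Fin 2) (Fin 2) R) (x : Fin 2 → R) :
    krylovDet A x = A 1 0 * x 0 ^ 2 + (A 1 1 - A 0 0) * x 0 * x 1 - A 0 1 * x 1 ^ 2 := by
  simp only [krylovDet, Matrix.det_fin_two, Matrix.of_apply, Matrix.cons_val_zero,
    Matrix.cons_val_one, Matrix.mulVec, dotProduct, Fin.sum_univ_two]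
  ring

theorem krylovDet_single_zero (A : Matrix (Fin 2) (Fin 2) R) :
    krylovDet A (Pi.single 0 1) = A 1 0 := by
  simp [krylovDet_eq]

theorem krylovDet_adjugate (A : Matrix (Fin 2) (Fin 2) R) (x : Fin 2 → R) :
    krylovDet A.adjugate x = -krylovDet A x := by
  simp only [krylovDet_eq, Matrix.adjugate_fin_two, Matrix.of_apply, Matrix.cons_val',
    Matrix.cons_val_zero, Matrix.cons_val_one, Matrix.cons_val_fin_one]
  ring

theorem krylovDet_mulVec_of_mul_eq_mul {A B G : Matrix (Fin 2) (Fin 2) R} (h : G * A = B * G)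
    (x : Fin 2 → R) : krylovDet B (G *ᵥ x) = G.det * krylovDet A x := by
  have rows_eq : Matrix.of ![G *ᵥ x, B *ᵥ G *ᵥ x] = Matrix.of ![x, A *ᵥ x] * Gᵀ := by
    rw [Matrix.mulVec_mulVec, ← h, ← Matrix.mulVec_mulVec]
    simp only [Matrix.cons_mul, Matrix.vecMul_transpose, Matrix.empty_mul, Equiv.symm_apply_apply]
  rw [krylovDet, rows_eq, Matrix.det_mul, Matrix.det_transpose, mul_comm, krylovDet]

theorem four_mul_mul_krylovDet (A : Matrix (Fin 2) (Fin 2) R) (x : Fin 2 → R) :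
    4 * (A 1 0 * krylovDet A x) =
      (2 * A 1 0 * x 0 + (A 1 1 - A 0 0) * x 1) ^ 2 - A.discr * x 1 ^ 2 := by
  rw [krylovDet_eq, Matrix.discr_fin_two, Matrix.trace_fin_two, Matrix.det_fin_two]
  ring

variable [LinearOrder R] [IsStrictOrderedRing R]

theorem mul_krylovDet_nonneg {A : Matrix (Fin 2) (Fin 2) R} (hA : A.discr ≤ 0) (x : Fin 2 → R) :
    0 ≤ A 1 0 * krylovDet A x := by
  have four_mul_nonneg : 0 ≤ 4 * (A 1 0 * krylovDet A x) := by
    rw [four_mul_mul_krylovDet]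
    exact sub_nonneg_of_le ((mul_nonpos_of_nonpos_of_nonneg hA (sq_nonneg _)).trans (sq_nonneg _))
  exact nonneg_of_mul_nonneg_right four_mul_nonneg four_pos

theorem stmt5_general {F G : Matrix (Fin 2) (Fin 2) R} (hF : F.IsElliptic)
    (h : G * F = F.adjugate * G) : G.det ≤ 0 := by
  have det_mul_eq : G.det * F 1 0 = -krylovDet F (G *ᵥ Pi.single 0 1) := by
    rw [← krylovDet_adjugate, krylovDet_mulVec_of_mul_eq_mul h, krylovDet_single_zero]
  have det_mul_sq_nonpos : G.det * F 1 0 ^ 2 ≤ 0 := calc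
    G.det * F 1 0 ^ 2 = -(F 1 0 * krylovDet F (G *ᵥ Pi.single 0 1)) := by
      linear_combination F 1 0 * det_mul_eq
    _ ≤ 0 := neg_nonpos.mpr (mul_krylovDet_nonneg hF.le _)
  exact nonpos_of_mul_nonpos_left det_mul_sq_nonpos (sq_pos_of_ne_zero hF.c_ne_zero)

end KrylovDet

/-- Let `F = !![0, -1; 1, 1]` (characteristic polynomial `X² - X + 1`) and let
`F' = !![1, 1; -1, 0]` be its inverse over `ℤ`. Then every integer matrix `G` with
`G * F = F' * G` has `det G ≤ 0`; in particular, there is no such `G` with `det G = 1`. -/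
theorem stmt5 (G : Matrix (Fin 2) (Fin 2) ℤ)
    (h : G * !![0, -1; 1, 1] = !![1, 1; -1, 0] * G) :
    G.det ≤ 0 := by
  refine stmt5_general (F := !![0, -1; 1, 1]) ?_ (by simpa [Matrix.adjugate_fin_two_of] using h)
  norm_num [Matrix.IsElliptic, Matrix.discr_fin_two, Matrix.trace_fin_two_of, Matrix.det_fin_two_of]
end

section
/- Let n > 2 be an even natural number and let F be an n×n matrix over ℚ whose characteristic polynomial equals X^n − X + 1 (so F is invertible). Then there is no invertible n×n matrix G over ℚ such that G·F = F⁻¹·G. -/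
open Polynomial

/-!
Up to its constant coefficient, the characteristic polynomial of `F⁻¹` is the reverse of that of
`F`, and conjugate matrices have the same characteristic polynomial. So if `F`, with characteristic
polynomial `X ^ n - X + 1`, were conjugate to `F⁻¹`, this trinomial would equal its reverse
`X ^ n - X ^ (n - 1) + 1`, which forces `n = 2`.
-/

section CharpolyInverse

variable {R ι : Type*} [CommRing R] [Fintype ι] [DecidableEq ι] {A B : Matrix ι ι R}

theorem charpoly_eq_of_isConj (h : IsConj A B) : A.charpoly = B.charpoly := by
  obtain ⟨U, hU⟩ := h
  rw [← Matrix.charpoly_units_conj U A, ← Matrix.coe_units_inv,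
    (Units.mul_inv_eq_iff_eq_mul U).mpr hU.eq]

theorem isUnit_iff_isUnit_charpoly_coeff_zero : IsUnit A ↔ IsUnit (A.charpoly.coeff 0) := by
  rw [Matrix.isUnit_iff_isUnit_det, Matrix.det_eq_sign_charpoly_coeff,
    (isUnit_one.neg.pow _).mul_left_iff]

theorem C_charpoly_coeff_zero_mul_charpoly_inv (hA : IsUnit A) :
    C (A.charpoly.coeff 0) * A⁻¹.charpoly = A.charpoly.reverse := by
  have hdet : A.det * Ring.inverse A.det = 1 :=
    Ring.mul_inverse_cancel _ (A.isUnit_iff_isUnit_det.mp hA)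
  have hcoeff : C (A.charpoly.coeff 0) * (-1) ^ Fintype.card ι = C A.det := by
    simp [Matrix.det_eq_sign_charpoly_coeff, mul_comm]
  rw [Matrix.charpoly_inv A hA, Matrix.reverse_charpoly, mul_assoc, ← mul_assoc, hcoeff,
    ← mul_assoc, ← C_mul, hdet, C_1, one_mul]

theorem reverse_charpoly_of_isConj_inv (hA : IsUnit A) (h : IsConj A A⁻¹) :
    A.charpoly.reverse = C (A.charpoly.coeff 0) * A.charpoly := by
  rw [← C_charpoly_coeff_zero_mul_charpoly_inv hA, ← charpoly_eq_of_isConj h]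

end CharpolyInverse

section Trinomial

variable {R : Type*} [Ring R] [Nontrivial R] {n : ℕ}

theorem natDegree_X_pow_sub_X_add_one (hn : 2 ≤ n) : (X ^ n - X + 1 : R[X]).natDegree = n := by
  have hlow : (1 - X : R[X]).natDegree < (X ^ n : R[X]).natDegree := by
    rw [natDegree_X_pow]
    exact (show (1 - X : R[X]).natDegree ≤ 1 by compute_degree).trans_lt hn
  rw [show (X ^ n - X + 1 : R[X]) = X ^ n + (1 - X) by abel,
    natDegree_add_eq_left_of_natDegree_lt hlow, natDegree_X_pow]

theorem reverse_X_pow_sub_X_add_one (hn : 2 ≤ n) :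
    (X ^ n - X + 1 : R[X]).reverse = X ^ n - X ^ (n - 1) + 1 := by
  have hX : reflect n (X : R[X]) = X ^ (n - 1) := by
    simpa [revAt_le (show 1 ≤ n by lia)] using reflect_monomial (R := R) n 1
  rw [reverse, natDegree_X_pow_sub_X_add_one hn, reflect_add, reflect_sub, reflect_monomial,
    reflect_one, hX, revAt_le le_rfl, Nat.sub_self, pow_zero]
  abel

theorem reverse_X_pow_sub_X_add_one_ne (hn : 2 < n) :
    (X ^ n - X + 1 : R[X]).reverse ≠ X ^ n - X + 1 := by
  intro h
  rw [reverse_X_pow_sub_X_add_one hn.le, add_left_inj, sub_right_inj] at h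
  have hdeg : n - 1 = 1 := by simpa using congrArg natDegree h
  lia

end Trinomial

theorem stmt7_general {R ι : Type*} [CommRing R] [Nontrivial R] [Fintype ι] [DecidableEq ι]
    (n : ℕ) (hn : 2 < n) (F : Matrix ι ι R) (hF : F.charpoly = X ^ n - X + 1) :
    ¬ IsConj F F⁻¹ := by
  intro hconj
  have hcoeff : F.charpoly.coeff 0 = 1 := by
    simp [hF, coeff_X_pow, show 0 ≠ n by lia]
  have hunit : IsUnit F :=
    isUnit_iff_isUnit_charpoly_coeff_zero.mpr (hcoeff ▸ isUnit_one)
  have hrev : F.charpoly.reverse = F.charpoly := by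
    rw [reverse_charpoly_of_isConj_inv hunit hconj, hcoeff, C_1, one_mul]
  rw [hF] at hrev
  exact reverse_X_pow_sub_X_add_one_ne hn hrev

/-- If `n > 2` is even and `F` is an `n × n` matrix over `ℚ` with characteristic polynomial
`X^n - X + 1`, then no invertible matrix `G` over `ℚ` satisfies `G * F = F⁻¹ * G`. -/
theorem stmt7 (n : ℕ) (hn : 2 < n) (hne : Even n)
    (F : Matrix (Fin n) (Fin n) ℚ) (hF : F.charpoly = X ^ n - X + 1) :
    ¬ ∃ G : Matrix (Fin n) (Fin n) ℚ, IsUnit G ∧ G * F = F⁻¹ * G := by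
  rintro ⟨_, ⟨U, rfl⟩, hU⟩
  exact stmt7_general n hn F hF ⟨U, hU⟩
end

section
/- In the polynomial ring ℤ[X₀, X₁, X₂], let q₁ = X₁X₂, q₂ = 2·X₀X₂ and q₃ = 3·X₀X₁. Let M be a 3×3 integer matrix with det M = ±1, and let σ_M denote the ℤ-algebra substitution sending each variable X_i to the linear form Σ_j M_{ij}·X_j. Suppose there exists a 3×3 integer matrix N such that σ_M(q_i) = Σ_j N_{ij}·q_j for i = 1, 2, 3. Then M is a diagonal matrix with each diagonal entry equal to 1 or −1. -/
open MvPolynomial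

/-!
The common zeros of the forms `dᵢ ∏_{j ≠ i} Xⱼ` are the points with at least two vanishing
coordinates, and a substitution that preserves the span of the forms preserves this locus. Applied
to the generic point of `X_k = X_l = 0`, this says that some two rows of `M` are supported in
`{k, l}`. A permutation `π` contributing to `det M` has `M_{π k, k} ≠ 0` for all `k`, so these two
rows can only be `π k` and `π l`; varying `l`, which takes a third index, row `π k` is supported in
`{k}`. Hence `M` is monomial, with unit entries. Evaluating at the point whose only zero coordinate
is the `m`-th then gives `d_m ∣ d_{π m}`, so `d` is constant up to units along the cycles of `π`,
and `π = 1` when no two of the `dᵢ` are associated.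
-/

theorem associated_apply_perm_of_forall_dvd {ι R : Type*} [Finite ι] [CommMonoidWithZero R]
    [IsCancelMulZero R] {d : ι → R} {π : Equiv.Perm ι} (h : ∀ m, d m ∣ d (π m)) (m : ι) :
    Associated (d m) (d (π m)) := by
  have dvd_pow (n : ℕ) (k : ι) : d k ∣ d ((π ^ n) k) := by
    induction n with
    | zero => simp
    | succ n ih => exact ih.trans (by simpa only [pow_succ', Equiv.Perm.mul_apply] using h _)
  refine associated_of_dvd_dvd (h m) ?_
  have cycle : (π ^ (orderOf π - 1)) (π m) = m := by
    rw [← Equiv.Perm.mul_apply, pow_sub_one_mul (orderOf_pos π).ne', pow_orderOf_eq_one,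
      Equiv.Perm.one_apply]
  simpa only [cycle] using dvd_pow (orderOf π - 1) (π m)

theorem apply_perm_eq_zero_of_exists_two_rows {ι R : Type*} [Zero R] (hι : 3 ≤ ENat.card ι)
    {M : Matrix ι ι R} {π : Equiv.Perm ι} (hπ : ∀ k, M (π k) k ≠ 0)
    (h : ∀ k l, k ≠ l → ∃ a b, a ≠ b ∧ ∀ t, t ≠ k → t ≠ l → M a t = 0 ∧ M b t = 0)
    {k t : ι} (htk : t ≠ k) : M (π k) t = 0 := by
  obtain ⟨l, hlk, hlt⟩ : ∃ l, l ≠ k ∧ l ≠ t := ENat.exists_ne_ne_of_three_le hι k t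
  obtain ⟨a, b, hab, hzero⟩ := h k l hlk.symm
  obtain ⟨i, rfl⟩ := π.surjective a
  obtain ⟨j, rfl⟩ := π.surjective b
  have hi : i = k ∨ i = l := by
    by_contra! hi
    exact hπ i (hzero i hi.1 hi.2).1
  have hj : j = k ∨ j = l := by
    by_contra! hj
    exact hπ j (hzero j hj.1 hj.2).2
  have hij : i ≠ j := fun hij => hab (congrArg π hij)
  obtain rfl | rfl : i = k ∨ j = k := by grind
  · exact (hzero t htk hlt.symm).1
  · exact (hzero t htk hlt.symm).2

section MonomialMatrix

variable {ι R : Type*} [Fintype ι] [DecidableEq ι] [CommRing R] {M : Matrix ι ι R}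

theorem exists_perm_forall_apply_ne_zero_of_det_ne_zero (hM : M.det ≠ 0) :
    ∃ π : Equiv.Perm ι, ∀ k, M (π k) k ≠ 0 := by
  rw [Matrix.det_apply] at hM
  obtain ⟨π, -, hπ⟩ := Finset.exists_ne_zero_of_sum_ne_zero hM
  refine ⟨π, fun k hk => hπ ?_⟩
  have prod_eq_zero : ∏ i, M (π i) i = 0 := Finset.prod_eq_zero (Finset.mem_univ k) hk
  exact (congrArg _ prod_eq_zero).trans (smul_zero _)

theorem isUnit_apply_perm_of_isUnit_det (hM : IsUnit M.det) {π : Equiv.Perm ι}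
    (hπ : ∀ k t, t ≠ k → M (π k) t = 0) (k : ι) : IsUnit (M (π k) k) := by
  have submatrix_eq : M.submatrix π id = Matrix.diagonal fun k => M (π k) k := by
    ext i j
    by_cases hij : i = j
    · simp [hij]
    · simp [hij, hπ i j (Ne.symm hij)]
  have prod_eq : ∏ k, M (π k) k = Equiv.Perm.sign π * M.det := by
    rw [← Matrix.det_diagonal, ← submatrix_eq, Matrix.det_permute]
  have isUnit_prod : IsUnit (∏ k, M (π k) k) :=
    prod_eq ▸ ((Equiv.Perm.sign π).isUnit.map (Int.castRingHom R)).mul hM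
  exact IsUnit.prod_univ_iff.1 isUnit_prod k

end MonomialMatrix

section Forms

open scoped Matrix

variable {ι R A : Type*} [Fintype ι] [CommSemiring R] [CommSemiring A] [Algebra R A]

/-- The substitution `σ_M` on `R[Xᵢ]`, sending `Xᵢ` to the linear form given by row `i` of `M`. -/
noncomputable def linearSubst (M : Matrix ι ι R) : MvPolynomial ι R →ₐ[R] MvPolynomial ι R :=
  aeval fun i => ∑ j, C (M i j) * X j

/-- The form `dᵢ ∏_{j ≠ i} Xⱼ`; these are the forms `qᵢ` of the diagonal lemma, in any number of
variables and with arbitrary coefficients. -/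
noncomputable def omitForm [DecidableEq ι] (d : ι → R) (i : ι) : MvPolynomial ι R :=
  C (d i) * ∏ j ∈ Finset.univ.erase i, X j

theorem aeval_linearSubst (M : Matrix ι ι R) (v : ι → A) (p : MvPolynomial ι R) :
    aeval v (linearSubst M p) = aeval (M.map (algebraMap R A) *ᵥ v) p := by
  rw [linearSubst, ← AlgHom.comp_apply, comp_aeval]
  congr 2 with i
  simp [Matrix.mulVec, dotProduct]

variable [DecidableEq ι]

theorem aeval_omitForm (d : ι → R) (v : ι → A) (i : ι) :
    aeval v (omitForm d i) = algebraMap R A (d i) * ∏ j ∈ Finset.univ.erase i, v j := by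
  simp [omitForm]

theorem forall_aeval_omitForm_eq_zero_iff [Nonempty ι] [Nontrivial A] [NoZeroDivisors A]
    [FaithfulSMul R A] {d : ι → R} (hd : ∀ i, d i ≠ 0) {v : ι → A} :
    (∀ i, aeval v (omitForm d i) = 0) ↔ ∃ k l, k ≠ l ∧ v k = 0 ∧ v l = 0 := by
  have aeval_eq_zero_iff (i : ι) : aeval v (omitForm d i) = 0 ↔ ∃ j ≠ i, v j = 0 := by
    simp [aeval_omitForm, Finset.prod_eq_zero_iff, hd]
  simp only [aeval_eq_zero_iff]
  constructor
  · intro h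
    obtain ⟨k, -, hk⟩ := h (Classical.arbitrary ι)
    obtain ⟨l, hlk, hl⟩ := h k
    exact ⟨k, l, hlk.symm, hk, hl⟩
  · rintro ⟨k, l, hkl, hk, hl⟩ i
    by_cases hki : k = i
    · exact ⟨l, hki ▸ hkl.symm, hl⟩
    · exact ⟨k, hki, hk⟩

theorem eval_update_one_zero_omitForm (d : ι → R) (i m : ι) :
    eval (Function.update (1 : ι → R) m 0) (omitForm d i) = if i = m then d m else 0 := by
  rw [← coe_aeval_eq_eval, RingHom.coe_coe, aeval_omitForm]
  split_ifs with him
  · subst him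
    rw [Finset.prod_congr rfl fun j hj => Function.update_of_ne (Finset.ne_of_mem_erase hj) _ _]
    simp
  · rw [Finset.prod_eq_zero (i := m) (by simpa using Ne.symm him) (by simp), mul_zero]

theorem dvd_apply_perm_of_linearSubst_omitForm {M N : Matrix ι ι R} {d : ι → R}
    (hN : ∀ i, linearSubst M (omitForm d i) = ∑ j, C (N i j) * omitForm d j)
    {π : Equiv.Perm ι} (hπ : ∀ k t, t ≠ k → M (π k) t = 0) (hunit : ∀ k, IsUnit (M (π k) k))
    (m : ι) : d m ∣ d (π m) := by
  let v : ι → R := Function.update 1 m 0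
  have mulVec_apply (k : ι) (hk : k ≠ m) : (M *ᵥ v) (π k) = M (π k) k := by
    rw [Matrix.mulVec, dotProduct, Finset.sum_eq_single k]
    · simp [v, hk]
    · intro t _ htk
      rw [hπ k t htk, zero_mul]
    · simp
  have apply_mul_prod_eq : d (π m) * ∏ k ∈ Finset.univ.erase m, M (π k) k = N (π m) m * d m :=
    calc d (π m) * ∏ k ∈ Finset.univ.erase m, M (π k) k
        = d (π m) * ∏ j ∈ Finset.univ.erase (π m), (M *ᵥ v) j := by
          congr 1
          refine Finset.prod_equiv π (by simp) fun k hk => ?_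
          exact (mulVec_apply k (Finset.ne_of_mem_erase hk)).symm
      _ = aeval v (linearSubst M (omitForm d (π m))) := by
          simp [aeval_linearSubst, aeval_omitForm]
      _ = N (π m) m * d m := by
          simp [hN, v, eval_update_one_zero_omitForm]
  have isUnit_prod : IsUnit (∏ k ∈ Finset.univ.erase m, M (π k) k) :=
    IsUnit.prod_iff.2 fun k _ => hunit k
  exact isUnit_prod.dvd_mul_right.1 ⟨N (π m) m, by rw [apply_mul_prod_eq, mul_comm]⟩

end Forms

open scoped Matrix in
theorem exists_two_rows_of_linearSubst_omitForm {ι R : Type*} [Fintype ι] [DecidableEq ι]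
    [CommRing R] [IsDomain R] {M N : Matrix ι ι R} {d : ι → R} (hd : ∀ i, d i ≠ 0)
    (hN : ∀ i, linearSubst M (omitForm d i) = ∑ j, C (N i j) * omitForm d j)
    {k l : ι} (hkl : k ≠ l) :
    ∃ a b, a ≠ b ∧ ∀ t, t ≠ k → t ≠ l → M a t = 0 ∧ M b t = 0 := by
  have : Nonempty ι := ⟨k⟩
  let v : ι → MvPolynomial ι R := fun t => if t = k ∨ t = l then 0 else X t
  have hv : ∀ i, aeval v (omitForm d i) = 0 :=
    (forall_aeval_omitForm_eq_zero_iff hd).2 ⟨k, l, hkl, by simp [v], by simp [v]⟩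
  have hMv : ∀ i, aeval (M.map (algebraMap R (MvPolynomial ι R)) *ᵥ v) (omitForm d i) = 0 := by
    intro i
    rw [← aeval_linearSubst, hN, map_sum]
    exact Finset.sum_eq_zero fun j _ => by rw [map_mul, hv, mul_zero]
  have row_eq_zero {a t : ι} (ha : (M.map (algebraMap R (MvPolynomial ι R)) *ᵥ v) a = 0)
      (htk : t ≠ k) (htl : t ≠ l) : M a t = 0 := by
    have sum_eq_zero :
        ∑ j, (if j = k ∨ j = l then 0 else M a j) • (X j : MvPolynomial ι R) = 0 := by
      rw [← ha]
      refine Finset.sum_congr rfl fun j _ => ?_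
      split_ifs with hj <;> simp [v, hj, smul_eq_C_mul]
    simpa [htk, htl] using Fintype.linearIndependent_iff.1 (linearIndependent_X ι R) _ sum_eq_zero t
  obtain ⟨a, b, hab, ha, hb⟩ := (forall_aeval_omitForm_eq_zero_iff hd).1 hMv
  exact ⟨a, b, hab, fun t htk htl => ⟨row_eq_zero ha htk htl, row_eq_zero hb htk htl⟩⟩

theorem omitForm_one_two_three : omitForm ![(1 : ℤ), 2, 3] =
    ![X 1 * X 2, 2 * (X 0 * X 2), 3 * (X 0 * X 1)] := by
  have erase_zero : Finset.univ.erase (0 : Fin 3) = {1, 2} := by decide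
  have erase_one : Finset.univ.erase (1 : Fin 3) = {0, 2} := by decide
  have erase_two : Finset.univ.erase (2 : Fin 3) = {0, 1} := by decide
  funext i
  fin_cases i <;> simp [omitForm, erase_zero, erase_one, erase_two]

theorem stmt12_general {ι R : Type*} [Fintype ι] [DecidableEq ι] [CommRing R] [IsDomain R]
    (hι : 3 ≤ Fintype.card ι) (M : Matrix ι ι R) (hM : IsUnit M.det) (d : ι → R)
    (hd₀ : ∀ i, d i ≠ 0) (hd : Pairwise fun i j => ¬ Associated (d i) (d j)) (N : Matrix ι ι R)
    (hN : ∀ i, linearSubst M (omitForm d i) = ∑ j, C (N i j) * omitForm d j) :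
    (∀ i j, i ≠ j → M i j = 0) ∧ ∀ i, IsUnit (M i i) := by
  obtain ⟨π, hπ⟩ := exists_perm_forall_apply_ne_zero_of_det_ne_zero hM.ne_zero
  have offDiag_eq_zero : ∀ k t, t ≠ k → M (π k) t = 0 := fun k t =>
    apply_perm_eq_zero_of_exists_two_rows (by simpa using hι) hπ fun _ _ =>
      exists_two_rows_of_linearSubst_omitForm hd₀ hN
  have hunit : ∀ k, IsUnit (M (π k) k) := isUnit_apply_perm_of_isUnit_det hM offDiag_eq_zero
  have hassoc : ∀ m, Associated (d m) (d (π m)) := associated_apply_perm_of_forall_dvd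
    (dvd_apply_perm_of_linearSubst_omitForm hN offDiag_eq_zero hunit)
  obtain rfl : π = 1 := Equiv.ext fun m => (hd.eq (not_not.2 (hassoc m))).symm
  exact ⟨fun i j hij => offDiag_eq_zero i j hij.symm, hunit⟩

/-- Let `q₁ = X₁X₂`, `q₂ = 2X₀X₂`, `q₃ = 3X₀X₁` in `ℤ[X₀, X₁, X₂]`. If `M` is a `3 × 3`
integer matrix with `det M = ±1` and the substitution `Xᵢ ↦ Σⱼ Mᵢⱼ Xⱼ` maps each `qᵢ`
into the `ℤ`-span of `q₁, q₂, q₃`, then `M` is diagonal with entries `±1`. -/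
theorem stmt12 (M : Matrix (Fin 3) (Fin 3) ℤ) (hM : M.det = 1 ∨ M.det = -1)
    (q : Fin 3 → MvPolynomial (Fin 3) ℤ)
    (hq : q = ![X 1 * X 2, 2 * (X 0 * X 2), 3 * (X 0 * X 1)])
    (N : Matrix (Fin 3) (Fin 3) ℤ)
    (hN : ∀ i, (aeval fun i => ∑ j, C (M i j) * X j) (q i) = ∑ j, C (N i j) * q j) :
    (∀ i j, i ≠ j → M i j = 0) ∧ (∀ i, M i i = 1 ∨ M i i = -1) := by
  obtain rfl := hq.trans omitForm_one_two_three.symm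
  simpa only [Int.isUnit_iff] using stmt12_general (by simp) M (Int.isUnit_iff.2 hM) ![1, 2, 3]
    (by decide) (by simp only [Int.associated_iff_natAbs, Pairwise]; decide) N hN
end

section
/- Fix natural numbers n ≥ 1, an odd prime p, and an integer c with c^n ≡ −1 (mod p). Define f : (Fin n → ℂ) → (Fin n → ℂ) by (f z)_j = z_{j+1} for j < n−1 and (f z)_{n−1} = conj(z₀), and define A : (Fin n → ℂ) → (Fin n → ℂ) by (A z)_j = exp(2πi·c^(j+1)/p) · z_j. Then: (i) the 2n-fold iterate of f is the identity map; and (ii) f ∘ A = A^[c] ∘ f, where A^[c] denotes the c-fold iterate of A. -/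
open Complex

/-!
Extend `z` to the sequence `w` with `w (i + n) = conj (w i)`: then `f` is the shift `i ↦ i + 1` of
`w`, so `f^[n]` is coordinatewise conjugation. With `ζ = exp (2πi / p)`, the map `A` is
multiplication by the vector `a` with entries `ζ ^ c ^ (j + 1)`. As `f` is multiplicative, (ii)
amounts to `f a = a ^ c`; this is clear except in the last coordinate, where it follows from
`ζ ^ c ^ n = ζ⁻¹ = conj ζ`.
-/

section TwistedShift

variable {α : Type*} {n : ℕ}

/-- The cyclic shift `(z₀, …, zₙ₋₁) ↦ (z₁, …, zₙ₋₁, σ z₀)` twisted by a self-map `σ`. It serves as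
the map `f` on `ℂⁿ` when `σ` is complex conjugation. -/
def twistedShift (σ : α → α) (z : Fin n → α) (j : Fin n) : α :=
  if h : (j : ℕ) + 1 < n then z ⟨j + 1, h⟩ else σ (z ⟨0, j.pos⟩)

theorem twistedShift_of_lt (σ : α → α) (z : Fin n → α) {j : Fin n} (h : (j : ℕ) + 1 < n) :
    twistedShift σ z j = z ⟨j + 1, h⟩ :=
  dif_pos h

theorem twistedShift_of_eq (σ : α → α) (z : Fin n → α) {j : Fin n} (h : (j : ℕ) + 1 = n) :
    twistedShift σ z j = σ (z ⟨0, j.pos⟩) :=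
  dif_neg h.not_lt

theorem twistedShift_iterate_apply (σ : α → α) (k : ℕ) (z : Fin n → α) (j : Fin n) :
    (twistedShift σ)^[k] z j = σ^[(j + k) / n] (z ⟨(j + k) % n, Nat.mod_lt _ j.pos⟩) := by
  induction k generalizing j with
  | zero => simp [Nat.div_eq_of_lt, Nat.mod_eq_of_lt]
  | succ k ih =>
    rw [Function.iterate_succ_apply']
    rcases Nat.lt_or_eq_of_le (Nat.succ_le_of_lt j.isLt) with hlt | hlast
    · rw [twistedShift_of_lt σ _ hlt, ih]
      simp only [Nat.add_assoc, Nat.add_comm 1 k]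
    · have hwrap : (j : ℕ) + (k + 1) = k + n := by omega
      rw [twistedShift_of_eq σ _ hlast, ih]
      simp only [hwrap, zero_add, Nat.add_div_right _ j.pos, Nat.add_mod_right,
        Function.iterate_succ_apply']

theorem twistedShift_iterate_mul (σ : α → α) (m : ℕ) (z : Fin n → α) :
    (twistedShift σ)^[m * n] z = σ^[m] ∘ z := by
  funext j
  simp [twistedShift_iterate_apply, Nat.add_mul_div_right _ _ j.pos, Nat.div_eq_of_lt,
    Nat.mod_eq_of_lt]

theorem twistedShift_iterate_two_mul {σ : α → α} (hσ : Function.Involutive σ) :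
    (twistedShift σ : (Fin n → α) → Fin n → α)^[2 * n] = id := by
  funext z
  rw [twistedShift_iterate_mul, hσ.iterate_even even_two, Function.id_comp, id]

end TwistedShift

section Multiplicative

variable {M F : Type*} [FunLike F M M] {n c : ℕ}

theorem twistedShift_mul [Mul M] [MulHomClass F M M] (σ : F) (a z : Fin n → M) :
    twistedShift σ (a * z) = twistedShift σ a * twistedShift σ z := by
  funext j
  by_cases h : (j : ℕ) + 1 < n <;> simp [twistedShift, h]

theorem twistedShift_semiconj_mul_left [Monoid M] [MulHomClass F M M] {σ : F} {a : Fin n → M}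
    (ha : twistedShift σ a = a ^ c) :
    Function.Semiconj (twistedShift σ) (a * ·) (a * ·)^[c] := fun z => by
  rw [mul_left_iterate, twistedShift_mul, ha]

theorem twistedShift_pow_pow_succ [Monoid M] [MonoidHomClass F M M] {σ : F} {ζ : M}
    (hζ : ζ ^ c ^ n = σ ζ) :
    twistedShift σ (fun j : Fin n => ζ ^ c ^ ((j : ℕ) + 1)) =
      (fun j : Fin n => ζ ^ c ^ ((j : ℕ) + 1)) ^ c := by
  funext j
  rw [Pi.pow_apply, ← pow_mul, ← pow_succ]
  rcases Nat.lt_or_eq_of_le (Nat.succ_le_of_lt j.isLt) with hlt | hlast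
  · rw [twistedShift_of_lt _ _ hlt]
  · calc twistedShift σ (fun j : Fin n => ζ ^ c ^ ((j : ℕ) + 1)) j
        = σ (ζ ^ c ^ (0 + 1)) := twistedShift_of_eq _ _ hlast
      _ = (ζ ^ c ^ n) ^ c := by rw [zero_add, pow_one, map_pow, hζ]
      _ = ζ ^ c ^ ((j : ℕ) + 1 + 1) := by rw [← pow_mul, ← pow_succ, congrArg (· + 1) hlast]

end Multiplicative

theorem pow_eq_conj_of_pow_succ_eq_one {𝕜 : Type*} [RCLike 𝕜] {ζ : 𝕜} {k : ℕ}
    (hζ : ζ ^ (k + 1) = 1) : ζ ^ k = (starRingEnd 𝕜) ζ := by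
  have hnorm : ‖ζ‖ = 1 := (isOfFinOrder_iff_pow_eq_one.2 ⟨k + 1, k.succ_pos, hζ⟩).norm_eq_one
  calc ζ ^ k = ζ⁻¹ := eq_inv_of_mul_eq_one_left (by rw [← pow_succ, hζ])
    _ = (starRingEnd 𝕜) ζ := RCLike.inv_eq_conj hnorm

theorem exp_mul_natCast_div (z w : ℂ) (k : ℕ) : exp (z * k / w) = exp (z / w) ^ k := by
  rw [← exp_nat_mul, mul_comm z, mul_div_assoc]

theorem exp_two_pi_mul_I_div_pow_self (p : ℕ) : exp (2 * Real.pi * I / p) ^ p = 1 := by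
  rcases eq_or_ne p 0 with rfl | hp
  · exact pow_zero _
  · exact (isPrimitiveRoot_exp p hp).pow_eq_one

theorem exp_two_pi_mul_I_div_pow_eq_conj {p k : ℕ} (hk : (k : ZMod p) = -1) :
    exp (2 * Real.pi * I / p) ^ k = (starRingEnd ℂ) (exp (2 * Real.pi * I / p)) := by
  obtain ⟨m, hm⟩ : p ∣ k + 1 := by
    rw [← ZMod.natCast_eq_zero_iff, Nat.cast_add_one, hk, neg_add_cancel]
  apply pow_eq_conj_of_pow_succ_eq_one
  rw [hm, pow_mul, exp_two_pi_mul_I_div_pow_self, one_pow]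

theorem stmt17_general (n : ℕ) (hn : 0 < n) (p : ℕ) (c : ℕ) (hc : (c : ZMod p) ^ n = -1)
    (f A : (Fin n → ℂ) → (Fin n → ℂ))
    (hf : ∀ (z : Fin n → ℂ) (j : Fin n), f z j =
      if h : (j : ℕ) + 1 < n then z ⟨(j : ℕ) + 1, h⟩
      else (starRingEnd ℂ) (z ⟨0, hn⟩))
    (hA : ∀ (z : Fin n → ℂ) (j : Fin n), A z j =
      Complex.exp (2 * Real.pi * Complex.I * (c : ℂ) ^ ((j : ℕ) + 1) / p) * z j) :
    f^[2 * n] = id ∧ f ∘ A = A^[c] ∘ f := by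
  let ζ := exp (2 * Real.pi * I / p)
  let a : Fin n → ℂ := fun j => ζ ^ c ^ ((j : ℕ) + 1)
  obtain rfl : f = twistedShift (starRingEnd ℂ) := funext₂ hf
  obtain rfl : A = (a * ·) := by
    funext z j
    rw [hA, ← Nat.cast_pow, exp_mul_natCast_div, Pi.mul_apply]
  have hζ : ζ ^ c ^ n = (starRingEnd ℂ) ζ :=
    exp_two_pi_mul_I_div_pow_eq_conj (by rw [Nat.cast_pow, hc])
  exact ⟨twistedShift_iterate_two_mul star_involutive,
    (twistedShift_semiconj_mul_left (twistedShift_pow_pow_succ hζ)).comp_eq⟩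

/-- Let `p` be an odd prime, `n ≥ 1` and `c` with `c^n ≡ -1 (mod p)`. Let
`f : ℂⁿ → ℂⁿ` be `(z₁, …, zₙ) ↦ (z₂, …, zₙ, conj z₁)` and let `A` be the
diagonal action `(A z)ⱼ = exp(2πi·c^(j+1)/p)·zⱼ`. Then `f^[2n] = id` and
`f ∘ A = A^[c] ∘ f`. -/
theorem stmt17 (n : ℕ) (hn : 0 < n) (p : ℕ) (hp : p.Prime) (hodd : Odd p)
    (c : ℕ) (hc : (c : ZMod p) ^ n = -1)
    (f A : (Fin n → ℂ) → (Fin n → ℂ))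
    (hf : ∀ (z : Fin n → ℂ) (j : Fin n), f z j =
      if h : (j : ℕ) + 1 < n then z ⟨(j : ℕ) + 1, h⟩
      else (starRingEnd ℂ) (z ⟨0, hn⟩))
    (hA : ∀ (z : Fin n → ℂ) (j : Fin n), A z j =
      Complex.exp (2 * Real.pi * Complex.I * (c : ℂ) ^ ((j : ℕ) + 1) / p) * z j) :
    f^[2 * n] = id ∧ f ∘ A = A^[c] ∘ f :=
  stmt17_general n hn p c hc f A hf hA
end
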